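/- arXiv:2012.15595 — 5 statements merged into one kernel-verified Lean document; each statement's English description precedes it below -/
import Mathlib

section
/- Let p ≥ 1 be an integer, let L_p, μ, ε > 0, let z* ∈ ℝ^d, and let z̃₁ ∈ ℝ^d with ‖z̃₁ − z*‖₂ ≤ R for some R > 0 with μR² > ε. For i ≥ 1 set R_i = R/2^{i−1} and T_i = ⌈(64 L_p R_i^{p−1} / μ)^{2/(p+1)}⌉. Suppose a sequence (z̃_i)_{i≥1} satisfies, for every i ≥ 1, μ‖z̃_{i+1} − z*‖₂² ≤ (16 L_p / p!) · (‖z̃_i − z*‖₂² / (2 T_i))^{(p+1)/2}. Then: (i) ‖z̃_{i+1} − z*‖₂ ≤ R/2^i for every i ≥ 1; (ii) for n = ⌈(1/2) log₂(μR²/ε)⌉ one has μ‖z̃_{n+1} − z*‖₂² ≤ ε; and (iii) the total inner iteration count satisfies Σ_{i=1}^n T_i ≤ n · ((64 L_p R^{p−1}/μ)^{2/(p+1)} + 1). -/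
theorem stage_aux (p : ℕ) (hp : 1 ≤ p) (L μ r x T : ℝ) (hL : 0 < L) (hμ : 0 < μ)
    (hr : 0 < r) (hx : 0 ≤ x) (hxr : x ≤ r)
    (hT : (64 * L * r ^ (p - 1) / μ) ^ (2 / ((p : ℝ) + 1)) ≤ T) :
    16 * L / (Nat.factorial p : ℝ) * (x ^ 2 / (2 * T)) ^ (((p : ℝ) + 1) / 2)
      ≤ μ * (r / 2) ^ 2 := by
  have hA : 0 < 64 * L * r ^ (p - 1) / μ := by positivity
  have hB : 0 < (64 * L * r ^ (p - 1) / μ) ^ (2 / ((p : ℝ) + 1)) := Real.rpow_pos_of_pos hA _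
  have hTp : 0 < T := lt_of_lt_of_le hB hT
  have hq : 0 ≤ ((p : ℝ) + 1) / 2 := by positivity
  have hTq : 64 * L * r ^ (p - 1) / μ ≤ T ^ (((p : ℝ) + 1) / 2) := by
    have h := Real.rpow_le_rpow hB.le hT hq
    rw [← Real.rpow_mul hA.le] at h
    have e : (2 / ((p : ℝ) + 1)) * (((p : ℝ) + 1) / 2) = 1 := by
      field_simp
    rwa [e, Real.rpow_one] at h
  have h1 : (x ^ 2 / (2 * T)) ^ (((p : ℝ) + 1) / 2) ≤ (r ^ 2 / T) ^ (((p : ℝ) + 1) / 2) := by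
    apply Real.rpow_le_rpow (by positivity) _ hq
    apply div_le_div₀ (by positivity) (by gcongr) hTp (by linarith)
  have h2 : (r ^ 2 / T) ^ (((p : ℝ) + 1) / 2) = r ^ (p + 1) / T ^ (((p : ℝ) + 1) / 2) := by
    rw [Real.div_rpow (by positivity) hTp.le, ← Real.rpow_natCast r 2, ← Real.rpow_mul hr.le,
      ← Real.rpow_natCast r (p + 1)]
    congr 2
    push_cast
    ring
  have hf : 16 * L / (Nat.factorial p : ℝ) ≤ 16 * L := by
    apply div_le_self (by positivity)
    exact_mod_cast Nat.factorial_pos p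
  calc _ ≤ 16 * L * (r ^ (p + 1) / T ^ (((p : ℝ) + 1) / 2)) := by
        rw [← h2]
        exact mul_le_mul hf h1 (by positivity) (by positivity)
    _ ≤ 16 * L * (r ^ (p + 1) / (64 * L * r ^ (p - 1) / μ)) := by
        gcongr
    _ = μ * (r / 2) ^ 2 := by
        obtain ⟨m, rfl⟩ : ∃ m, p = m + 1 := ⟨p - 1, by omega⟩
        simp only [Nat.add_sub_cancel]
        field_simp
        ring

/-- Complexity of the restarted HighOrderMirrorProx method (Theorem 1 of the paper).
Given the per-stage guarantee
`μ‖z̃_{i+1} − z*‖² ≤ (16 L_p/p!) (‖z̃_i − z*‖²/(2 T_i))^{(p+1)/2}` with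
`T_i = ⌈(64 L_p R_i^{p−1}/μ)^{2/(p+1)}⌉`, `R_i = R/2^{i−1}`, one gets
(i) geometric decrease `‖z̃_{i+1} − z*‖ ≤ R/2^i`,
(ii) `μ‖z̃_{n+1} − z*‖² ≤ ε` for `n = ⌈(1/2) log₂(μR²/ε)⌉`, and
(iii) total inner iteration count `Σ_{i=1}^n T_i ≤ n((64 L_p R^{p−1}/μ)^{2/(p+1)} + 1)`. -/
theorem restarted_highOrderMirrorProx_complexity {d : ℕ} (p : ℕ) (hp : 1 ≤ p)
    (L μ ε R : ℝ) (hL : 0 < L) (hμ : 0 < μ) (hε : 0 < ε) (hR : 0 < R)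
    (hεR : ε < μ * R ^ 2)
    (zstar : EuclideanSpace ℝ (Fin d)) (zt : ℕ → EuclideanSpace ℝ (Fin d))
    (hinit : ‖zt 1 - zstar‖ ≤ R)
    (T : ℕ → ℕ)
    (hT : ∀ i, T i = ⌈(64 * L * (R / 2 ^ (i - 1)) ^ (p - 1) / μ) ^ (2 / ((p : ℝ) + 1))⌉₊)
    (hstep : ∀ i ≥ 1, μ * ‖zt (i + 1) - zstar‖ ^ 2
      ≤ 16 * L / (Nat.factorial p : ℝ)
          * (‖zt i - zstar‖ ^ 2 / (2 * (T i : ℝ))) ^ (((p : ℝ) + 1) / 2)) :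
    (∀ i ≥ 1, ‖zt (i + 1) - zstar‖ ≤ R / 2 ^ i) ∧
    (μ * ‖zt (⌈Real.logb 2 (μ * R ^ 2 / ε) / 2⌉₊ + 1) - zstar‖ ^ 2 ≤ ε) ∧
    ((∑ i ∈ Finset.Icc 1 ⌈Real.logb 2 (μ * R ^ 2 / ε) / 2⌉₊, (T i : ℝ))
      ≤ (⌈Real.logb 2 (μ * R ^ 2 / ε) / 2⌉₊ : ℝ)
          * ((64 * L * R ^ (p - 1) / μ) ^ (2 / ((p : ℝ) + 1)) + 1)) := by
  have key : ∀ i, ‖zt (i + 1) - zstar‖ ≤ R / 2 ^ i := by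
    intro i
    induction i with
    | zero => simpa using hinit
    | succ k ih =>
      have h := hstep (k + 1) (by omega)
      have hTk := hT (k + 1)
      simp only [Nat.add_sub_cancel] at hTk
      have h2 := stage_aux p hp L μ (R / 2 ^ k) ‖zt (k + 1) - zstar‖ (T (k + 1)) hL hμ
        (by positivity) (norm_nonneg _) ih (by rw [hTk]; exact Nat.le_ceil _)
      have h3 := le_of_mul_le_mul_left (h.trans h2) hμ
      have h4 := (pow_le_pow_iff_left₀ (norm_nonneg _) (by positivity) two_ne_zero).1 h3
      calc _ ≤ _ := h4
        _ = _ := by rw [pow_succ]; field_simp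
  refine ⟨fun i _ => key i, ?_, ?_⟩
  · set n := ⌈Real.logb 2 (μ * R ^ 2 / ε) / 2⌉₊ with hn
    have h1 : Real.logb 2 (μ * R ^ 2 / ε) / 2 ≤ n := Nat.le_ceil _
    have h2 : Real.logb 2 (μ * R ^ 2 / ε) ≤ ((2 * n : ℕ) : ℝ) := by push_cast; linarith
    rw [Real.logb_le_iff_le_rpow (by norm_num) (by positivity), Real.rpow_natCast,
      div_le_iff₀ hε] at h2
    calc μ * ‖zt (n + 1) - zstar‖ ^ 2 ≤ μ * (R / 2 ^ n) ^ 2 := by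
          gcongr
          exact key n
      _ = μ * R ^ 2 / 2 ^ (2 * n) := by rw [div_pow, ← pow_mul, mul_comm n 2]; ring
      _ ≤ ε := by rw [div_le_iff₀ (by positivity)]; linarith
  · have hb : ∀ i ∈ Finset.Icc 1 ⌈Real.logb 2 (μ * R ^ 2 / ε) / 2⌉₊,
        (T i : ℝ) ≤ (64 * L * R ^ (p - 1) / μ) ^ (2 / ((p : ℝ) + 1)) + 1 := by
      intro i _
      rw [hT i]
      refine (Nat.ceil_lt_add_one (by positivity)).le.trans ?_
      gcongr
      exact div_le_self hR.le (one_le_pow₀ (by norm_num))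
    have h := Finset.sum_le_card_nsmul _ _ _ hb
    rwa [nsmul_eq_mul, Nat.card_Icc, Nat.add_sub_cancel] at h
end

section
/- Let g : ℝ^n × ℝ^m → ℝ be differentiable, μ-strongly convex in x, μ-strongly concave in y, and with L₁-Lipschitz gradient, and let z* = (x*, y*) be its (unique) saddle point, so that ∇g(z*) = 0. Then for every z = (x,y) ∈ ℝ^n × ℝ^m, the duality gap satisfies G(x,y) ≤ (L₁³/(2μ²))·‖z − z*‖₂². -/
open scoped RealInnerProductSpace

/-- Partial gradient in the first (minimization) variable. -/
noncomputable def gradX {n m : ℕ}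
    (g : EuclideanSpace ℝ (Fin n) × EuclideanSpace ℝ (Fin m) → ℝ)
    (x : EuclideanSpace ℝ (Fin n)) (y : EuclideanSpace ℝ (Fin m)) :
    EuclideanSpace ℝ (Fin n) :=
  gradient (fun x' => g (x', y)) x

/-- Partial gradient in the second (maximization) variable. -/
noncomputable def gradY {n m : ℕ}
    (g : EuclideanSpace ℝ (Fin n) × EuclideanSpace ℝ (Fin m) → ℝ)
    (x : EuclideanSpace ℝ (Fin n)) (y : EuclideanSpace ℝ (Fin m)) :
    EuclideanSpace ℝ (Fin m) :=
  gradient (fun y' => g (x, y')) y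

lemma aux_pl {E : Type*} [NormedAddCommGroup E] [InnerProductSpace ℝ E] [CompleteSpace E]
    (f : E → ℝ) (G : E → E) (μ : ℝ) (hμ : 0 < μ) (hf : ∀ x, HasGradientAt f (G x) x)
    (hc : ∀ a b, ⟪G a - G b, a - b⟫ ≥ μ * ‖a - b‖ ^ 2) (u v : E) :
    f u - f v ≤ ‖G u‖ ^ 2 / (2 * μ) := by
  set d := v - u with hd
  let φ : ℝ → ℝ := fun t => f (u + t • d) - t * ⟪G u, d⟫ - μ / 2 * ‖d‖ ^ 2 * t ^ 2
  have hder : ∀ t, HasDerivAt φ (⟪G (u + t • d), d⟫ - ⟪G u, d⟫ - μ * ‖d‖ ^ 2 * t) t := by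
    intro t
    have h1 : HasDerivAt (fun t : ℝ => u + t • d) d t := by
      simpa using ((hasDerivAt_id t).smul_const d).const_add u
    have h2 := (hf (u + t • d)).hasFDerivAt.comp_hasDerivAt t h1
    have h3 := (h2.sub ((hasDerivAt_id t).mul_const ⟪G u, d⟫)).sub
      (((hasDerivAt_id t).pow 2).const_mul (μ / 2 * ‖d‖ ^ 2))
    refine (h3.congr_deriv ?_)
    simp
    ring
  have hmono : MonotoneOn φ (Set.Icc 0 1) := by
    apply monotoneOn_of_deriv_nonneg (convex_Icc 0 1)
    · exact fun t _ => (hder t).continuousAt.continuousWithinAt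
    · exact fun t _ => (hder t).differentiableAt.differentiableWithinAt
    · intro t ht
      rw [interior_Icc] at ht
      rw [(hder t).deriv]
      have h := hc (u + t • d) u
      have ht0 : 0 < t := ht.1
      simp only [add_sub_cancel_left, inner_smul_right, norm_smul, inner_sub_left,
        Real.norm_eq_abs, mul_pow, sq_abs] at h
      have : 0 ≤ t * (⟪G (u + t • d), d⟫ - ⟪G u, d⟫ - μ * ‖d‖ ^ 2 * t) := by nlinarith
      exact nonneg_of_mul_nonneg_right this ht0
  have h01 := hmono (by simp) (by simp) (zero_le_one (α := ℝ))
  have e : u + d = v := by simp [hd]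
  simp [φ, e] at h01
  have hcs : -⟪G u, d⟫ ≤ ‖G u‖ * ‖d‖ :=
    (neg_le_abs _).trans (abs_real_inner_le_norm _ _)
  rw [le_div_iff₀ (by positivity)]
  nlinarith [sq_nonneg (‖G u‖ - μ * ‖d‖)]

lemma aux_le {E : Type*} [NormedAddCommGroup E] [InnerProductSpace ℝ E]
    (a d : E) (μ L : ℝ) (hd : d ≠ 0) (h1 : ⟪a, d⟫ ≥ μ * ‖d‖ ^ 2) (h2 : ‖a‖ ≤ L * ‖d‖) :
    μ ≤ L := by
  have h := real_inner_le_norm a d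
  have hp : 0 < ‖d‖ := norm_pos_iff.2 hd
  have : μ * ‖d‖ ^ 2 ≤ L * ‖d‖ ^ 2 := by nlinarith
  exact le_of_mul_le_mul_right this (by positivity)

/-- For a differentiable, `μ`-strongly-convex–strongly-concave `g` with `L₁`-Lipschitz
gradient and saddle point `z* = (x*, y*)`, the duality gap satisfies
`G(x,y) ≤ (L₁³/(2μ²)) ‖z − z*‖²`. -/
theorem duality_gap_distance_bound {n m : ℕ}
    (g : EuclideanSpace ℝ (Fin n) × EuclideanSpace ℝ (Fin m) → ℝ)
    (μ L₁ : ℝ) (hμ : 0 < μ) (hL₁ : 0 < L₁)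
    (hg : Differentiable ℝ g)
    (hconv : ∀ x₁ x₂ y, ⟪gradX g x₁ y - gradX g x₂ y, x₁ - x₂⟫ ≥ μ * ‖x₁ - x₂‖ ^ 2)
    (hconc : ∀ x y₁ y₂, ⟪-gradY g x y₁ + gradY g x y₂, y₁ - y₂⟫ ≥ μ * ‖y₁ - y₂‖ ^ 2)
    (hLip : ∀ x₁ y₁ x₂ y₂,
      Real.sqrt (‖gradX g x₁ y₁ - gradX g x₂ y₂‖ ^ 2 + ‖gradY g x₁ y₁ - gradY g x₂ y₂‖ ^ 2)
        ≤ L₁ * Real.sqrt (‖x₁ - x₂‖ ^ 2 + ‖y₁ - y₂‖ ^ 2))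
    (xstar : EuclideanSpace ℝ (Fin n)) (ystar : EuclideanSpace ℝ (Fin m))
    (hsaddle : ∀ x y, g (xstar, y) ≤ g (xstar, ystar) ∧ g (xstar, ystar) ≤ g (x, ystar)) :
    ∀ x y,
      (⨆ y', g (x, y')) - (⨅ x', g (x', y))
        ≤ L₁ ^ 3 / (2 * μ ^ 2) * (‖x - xstar‖ ^ 2 + ‖y - ystar‖ ^ 2) := by
  intro x y
  have hX : ∀ y x, HasGradientAt (fun x' => g (x', y)) (gradX g x y) x := fun y x =>
    DifferentiableAt.hasGradientAt (by fun_prop)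
  have hY : ∀ x y, HasGradientAt (fun y' => g (x, y')) (gradY g x y) y := fun x y =>
    DifferentiableAt.hasGradientAt (by fun_prop)
  have hY' : ∀ x y, HasGradientAt (fun y' => - g (x, y')) (- gradY g x y) y := fun x y => by
    have := (hY x y).hasFDerivAt.neg
    rw [hasGradientAt_iff_hasFDerivAt, map_neg]
    exact this
  have hX0 : gradX g xstar ystar = 0 := by
    have hm : IsLocalMin (fun x' => g (x', ystar)) xstar :=
      Filter.Eventually.of_forall fun x' => (hsaddle x' ystar).2
    have := hm.hasFDerivAt_eq_zero (hX ystar xstar).hasFDerivAt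
    simpa using this
  have hY0 : gradY g xstar ystar = 0 := by
    have hm : IsLocalMax (fun y' => g (xstar, y')) ystar :=
      Filter.Eventually.of_forall fun y' => (hsaddle xstar y').1
    have := hm.hasFDerivAt_eq_zero (hY xstar ystar).hasFDerivAt
    simpa using this
  have hsup : (⨆ y', g (x, y')) ≤ g (x, y) + ‖gradY g x y‖ ^ 2 / (2 * μ) := by
    refine ciSup_le fun y' => ?_
    have := aux_pl (fun y' => - g (x, y')) (fun y' => - gradY g x y') μ hμ (hY' x)
      (fun a b => by
        have := hconc x a b
        rwa [sub_neg_eq_add]) y y'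
    simp only [norm_neg] at this
    linarith
  have hinf : g (x, y) - ‖gradX g x y‖ ^ 2 / (2 * μ) ≤ (⨅ x', g (x', y)) := by
    refine le_ciInf fun x' => ?_
    have := aux_pl (fun x' => g (x', y)) (fun x' => gradX g x' y) μ hμ (hX y)
      (fun a b => hconv a b y) x x'
    linarith
  have hm : ‖gradX g x y‖ ^ 2 + ‖gradY g x y‖ ^ 2
      ≤ L₁ ^ 2 * (‖x - xstar‖ ^ 2 + ‖y - ystar‖ ^ 2) := by
    have h := hLip x y xstar ystar
    rw [hX0, hY0, sub_zero, sub_zero] at h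
    have h2 := pow_le_pow_left₀ (Real.sqrt_nonneg _) h 2
    rwa [mul_pow, Real.sq_sqrt (by positivity), Real.sq_sqrt (by positivity)] at h2
  have hG : (⨆ y', g (x, y')) - (⨅ x', g (x', y))
      ≤ L₁ ^ 2 * (‖x - xstar‖ ^ 2 + ‖y - ystar‖ ^ 2) / (2 * μ) := by
    have : (‖gradX g x y‖ ^ 2 + ‖gradY g x y‖ ^ 2) / (2 * μ)
      ≤ L₁ ^ 2 * (‖x - xstar‖ ^ 2 + ‖y - ystar‖ ^ 2) / (2 * μ) := by gcongr
    rw [add_div] at this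
    linarith
  refine hG.trans ?_
  by_cases hz : x - xstar = 0 ∧ y - ystar = 0
  · simp [hz.1, hz.2]
  have hle : μ ≤ L₁ := by
    by_cases hx : x - xstar = 0
    · have hy : y - ystar ≠ 0 := fun h => hz ⟨hx, h⟩
      refine aux_le _ _ μ L₁ hy (hconc x y ystar) ?_
      have h := hLip x y x ystar
      rw [sub_self x, norm_zero, zero_pow two_ne_zero, zero_add,
        Real.sqrt_sq (norm_nonneg _)] at h
      refine le_trans ?_ h
      apply Real.le_sqrt_of_sq_le
      rw [neg_add_eq_sub, norm_sub_rev]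
      exact le_add_of_nonneg_left (by positivity)
    · refine aux_le _ _ μ L₁ hx (hconv x xstar y) ?_
      have h := hLip x y xstar y
      rw [sub_self y, norm_zero, zero_pow two_ne_zero, add_zero,
        Real.sqrt_sq (norm_nonneg _)] at h
      refine le_trans ?_ h
      apply Real.le_sqrt_of_sq_le
      exact le_add_of_nonneg_right (by positivity)
  have e : L₁ ^ 3 / (2 * μ ^ 2) * (‖x - xstar‖ ^ 2 + ‖y - ystar‖ ^ 2)
      = L₁ ^ 2 * (‖x - xstar‖ ^ 2 + ‖y - ystar‖ ^ 2) / (2 * μ) * (L₁ / μ) := by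
    field_simp
  rw [e]
  exact le_mul_of_one_le_right (by positivity) ((one_le_div hμ).2 hle)
end

section
/- Let p ≥ 1 and let g : ℝ^n × ℝ^m → ℝ be p times continuously differentiable with L_p-Lipschitz p-th derivative: ‖∇^p g(z₁) − ∇^p g(z₂)‖₂ ≤ L_p‖z₁ − z₂‖₂ for all z₁,z₂. Let Φ_{z,p}(ẑ) = Σ_{i=0}^p (1/i!)∇^i g(z)[ẑ − z]^i be the p-th order Taylor polynomial of g at z. Then for all z = (x,y) and ẑ = (x̂,ŷ) in ℝ^n × ℝ^m, the gradients with respect to the first block satisfy ‖∇_x g(ẑ) − ∇_x Φ_{z,p}(ẑ)‖₂ ≤ (L_p (√2)^{p−1}/p!) · ‖ẑ − z‖₂^p, and similarly for the gradient with respect to the second block. -/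
/-- The point of `ℝⁿ × ℝᵐ` (with the Euclidean/`L²` product structure) with coordinates
`(x, y)`. -/
noncomputable def mkZ {n m : ℕ} (x : EuclideanSpace ℝ (Fin n)) (y : EuclideanSpace ℝ (Fin m)) :
    WithLp 2 (EuclideanSpace ℝ (Fin n) × EuclideanSpace ℝ (Fin m)) :=
  (WithLp.equiv 2 (EuclideanSpace ℝ (Fin n) × EuclideanSpace ℝ (Fin m))).symm (x, y)

/-- The `p`-th order Taylor polynomial `Φ_{z,p}(ẑ) = Σ_{i=0}^p (1/i!) ∇ⁱ g(z)[ẑ − z]ⁱ`. -/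
noncomputable def taylorPoly {n m : ℕ} (p : ℕ)
    (g : WithLp 2 (EuclideanSpace ℝ (Fin n) × EuclideanSpace ℝ (Fin m)) → ℝ)
    (z zh : WithLp 2 (EuclideanSpace ℝ (Fin n) × EuclideanSpace ℝ (Fin m))) : ℝ :=
  ∑ i ∈ Finset.range (p + 1),
    (1 / (Nat.factorial i : ℝ)) * iteratedFDeriv ℝ i g z (fun _ => zh - z)

/-- Gradient with respect to the first block of variables. -/
noncomputable def gradXZ {n m : ℕ}
    (f : WithLp 2 (EuclideanSpace ℝ (Fin n) × EuclideanSpace ℝ (Fin m)) → ℝ)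
    (x : EuclideanSpace ℝ (Fin n)) (y : EuclideanSpace ℝ (Fin m)) :
    EuclideanSpace ℝ (Fin n) :=
  gradient (fun x' => f (mkZ x' y)) x

/-- Gradient with respect to the second block of variables. -/
noncomputable def gradYZ {n m : ℕ}
    (f : WithLp 2 (EuclideanSpace ℝ (Fin n) × EuclideanSpace ℝ (Fin m)) → ℝ)
    (x : EuclideanSpace ℝ (Fin n)) (y : EuclideanSpace ℝ (Fin m)) :
    EuclideanSpace ℝ (Fin m) :=
  gradient (fun y' => f (mkZ x y')) y

section TaylorAux

variable {E : Type} [NormedAddCommGroup E] [NormedSpace ℝ E]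

theorem aux_swap {F : Type} [NormedAddCommGroup F] [NormedSpace ℝ F] (k : ℕ) (f : E → F)
    (hf : ContDiff ℝ ((k + 2 : ℕ) : ℕ∞) f) (x : E) (u : Fin k → E) (a b : E) :
    iteratedFDeriv ℝ k (fderiv ℝ (fderiv ℝ f)) x u a b
      = iteratedFDeriv ℝ k (fderiv ℝ (fderiv ℝ f)) x u b a := by
  have h1 : ContDiff ℝ ((k + 1 : ℕ) : ℕ∞) (fderiv ℝ f) :=
    hf.fderiv_right (by norm_cast)
  have h2 : ContDiff ℝ ((k : ℕ) : ℕ∞) (fderiv ℝ (fderiv ℝ f)) :=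
    h1.fderiv_right (by norm_cast)
  let Φ : (E →L[ℝ] E →L[ℝ] F) →L[ℝ] (E →L[ℝ] E →L[ℝ] F) :=
    (ContinuousLinearMap.flipₗᵢ ℝ E E F).toContinuousLinearEquiv.toContinuousLinearMap
  have hΦ : ∀ B a b, Φ B a b = B b a := fun B a b => rfl
  have hsymm : Φ ∘ (fderiv ℝ (fderiv ℝ f)) = fderiv ℝ (fderiv ℝ f) := by
    funext y
    ext a b
    have := (hf.contDiffAt (x := y)).isSymmSndFDerivAt (by
      simp only [minSmoothness_of_isRCLikeNormedField]
      have h0 : ((2 : ℕ) : WithTop ℕ∞) ≤ ((k + 2 : ℕ) : WithTop ℕ∞) := Nat.cast_le.2 (by omega)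
      exact h0)
    exact this b a
  have h3 := ContinuousLinearMap.iteratedFDeriv_comp_left (F := E →L[ℝ] E →L[ℝ] F)
    (G := E →L[ℝ] E →L[ℝ] F) Φ (x := x) (h2.contDiffAt) (i := k) (by norm_cast)
  rw [hsymm] at h3
  have h4 := congrArg (fun M => M u a b) h3
  exact h4

theorem aux_symm {F : Type} [NormedAddCommGroup F] [NormedSpace ℝ F] (k : ℕ) (f : E → F)
    (hf : ContDiff ℝ ((k + 1 : ℕ) : ℕ∞) f) (x h v : E) (j : Fin (k + 1)) :
    iteratedFDeriv ℝ (k + 1) f x (Function.update (fun _ => h) j v)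
      = iteratedFDeriv ℝ k (fderiv ℝ f) x (fun _ => h) v := by
  induction k generalizing F with
  | zero =>
    rw [iteratedFDeriv_succ_apply_right]
    have : j = Fin.last 0 := Fin.ext (by have := j.2; simp)
    subst this
    simp
  | succ k ih =>
    rw [iteratedFDeriv_succ_apply_right]
    have h1 : ContDiff ℝ ((k + 1 : ℕ) : ℕ∞) (fderiv ℝ f) :=
      hf.fderiv_right (by norm_cast)
    induction j using Fin.lastCases with
    | last =>
      rw [Fin.init_update_last, Function.update_self]
      rfl
    | cast j =>
      rw [Fin.init_update_castSucc, Function.update_of_ne (Fin.castSucc_lt_last j).ne']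
      have := ih (fderiv ℝ f) h1 j
      have e : (Fin.init (fun _ : Fin (k + 1 + 1) => h)) = fun _ : Fin (k + 1) => h := rfl
      rw [e, this, aux_swap k f hf, iteratedFDeriv_succ_apply_right]
      rfl

noncomputable def tay {F : Type} [NormedAddCommGroup F] [NormedSpace ℝ F] (q : ℕ) (f : E → F)
    (z w : E) : F :=
  ∑ i ∈ Finset.range (q + 1), (1 / (Nat.factorial i : ℝ)) • iteratedFDeriv ℝ i f z (fun _ => w - z)

theorem aux_term {F : Type} [NormedAddCommGroup F] [NormedSpace ℝ F] (k : ℕ) (f : E → F)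
    (hf : ContDiff ℝ ((k + 1 : ℕ) : ℕ∞) f) (z w : E) :
    HasFDerivAt (fun w => (1 / (Nat.factorial (k + 1) : ℝ)) •
        iteratedFDeriv ℝ (k + 1) f z (fun _ => w - z))
      ((1 / (Nat.factorial k : ℝ)) • iteratedFDeriv ℝ k (fderiv ℝ f) z (fun _ => w - z)) w := by
  have h1 : HasFDerivAt (fun w : E => (fun _ : Fin (k + 1) => w - z))
      (ContinuousLinearMap.pi fun _ => ContinuousLinearMap.id ℝ E) w :=
    hasFDerivAt_pi.2 fun i => (hasFDerivAt_id w).sub_const z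
  have h2 := ((iteratedFDeriv ℝ (k + 1) f z).hasFDerivAt (fun _ => w - z)).comp w h1
  have h3 := h2.const_smul (1 / (Nat.factorial (k + 1) : ℝ))
  refine h3.congr_fderiv ?_
  ext v
  simp only [smul_apply, ContinuousLinearMap.comp_apply,
    ContinuousMultilinearMap.linearDeriv_apply, ContinuousLinearMap.pi_apply,
    ContinuousLinearMap.id_apply, aux_symm k f hf, Finset.sum_const, Finset.card_univ,
    Fintype.card_fin]
  rw [← Nat.cast_smul_eq_nsmul ℝ, smul_smul]
  congr 1
  rw [Nat.factorial_succ]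
  have := Nat.factorial_ne_zero k
  push_cast
  field_simp

theorem aux_tay {F : Type} [NormedAddCommGroup F] [NormedSpace ℝ F] (q : ℕ) (f : E → F)
    (hf : ContDiff ℝ ((q + 1 : ℕ) : ℕ∞) f) (z w : E) :
    HasFDerivAt (tay (q + 1) f z) (tay q (fderiv ℝ f) z w) w := by
  have e : tay (q + 1) f z = fun w => (∑ i ∈ Finset.range (q + 1),
      (1 / (Nat.factorial (i + 1) : ℝ)) • iteratedFDeriv ℝ (i + 1) f z (fun _ => w - z)) + f z := by
    funext w
    rw [tay, Finset.sum_range_succ']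
    simp
  rw [e, tay]
  refine HasFDerivAt.add_const _ (HasFDerivAt.fun_sum fun i hi => aux_term i f (hf.of_le ?_) z w)
  have := Finset.mem_range.1 hi
  norm_cast

theorem aux_bound {F : Type} [NormedAddCommGroup F] [NormedSpace ℝ F] (q : ℕ) (f : E → F)
    (hf : ContDiff ℝ (q : ℕ∞) f) (L : ℝ) (z : E)
    (hL : ∀ w, ‖iteratedFDeriv ℝ q f w - iteratedFDeriv ℝ q f z‖ ≤ L * ‖w - z‖) (w : E) :
    ‖f w - tay q f z w‖ ≤ L / (Nat.factorial (q + 1) : ℝ) * ‖w - z‖ ^ (q + 1) := by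
  induction q generalizing F w with
  | zero =>
    have := hL w
    rw [iteratedFDeriv_zero_eq_comp] at this
    simp only [Function.comp_apply, ← map_sub, LinearIsometryEquiv.norm_map] at this
    simpa [tay] using this
  | succ q ih =>
    have h1 : ContDiff ℝ (q : ℕ∞) (fderiv ℝ f) :=
      hf.fderiv_right (by norm_cast)
    have hL' : ∀ w, ‖iteratedFDeriv ℝ q (fderiv ℝ f) w - iteratedFDeriv ℝ q (fderiv ℝ f) z‖
        ≤ L * ‖w - z‖ := by
      intro w
      have := hL w
      rw [iteratedFDeriv_succ_eq_comp_right, iteratedFDeriv_succ_eq_comp_right,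
        Function.comp_apply, Function.comp_apply, ← LinearIsometryEquiv.map_sub,
        LinearIsometryEquiv.norm_map] at this
      exact this
    have hR : ∀ w, HasFDerivAt (fun w => f w - tay (q + 1) f z w)
        (fderiv ℝ f w - tay q (fderiv ℝ f) z w) w := fun w =>
      ((hf.differentiable (by norm_cast) w).hasFDerivAt).sub (aux_tay q f hf z w)
    set h := w - z with hh
    have hline : ∀ t : ℝ, HasDerivAt (fun t : ℝ => z + t • h) h t := fun t => by
      simpa using ((hasDerivAt_id t).smul_const h).const_add z
    have hφ : ∀ t : ℝ, HasDerivAt (fun t : ℝ => f (z + t • h) - tay (q + 1) f z (z + t • h))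
        ((fderiv ℝ f (z + t • h) - tay q (fderiv ℝ f) z (z + t • h)) h) t := fun t =>
      HasFDerivAt.comp_hasDerivAt (f := fun t : ℝ => z + t • h) t (hR (z + t • h)) (hline t)
    have hB : ∀ t : ℝ, HasDerivAt
        (fun t : ℝ => L / (Nat.factorial (q + 1 + 1) : ℝ) * ‖h‖ ^ (q + 1 + 1) * t ^ (q + 1 + 1))
        (L / (Nat.factorial (q + 1) : ℝ) * ‖h‖ ^ (q + 1 + 1) * t ^ (q + 1)) t := fun t => by
      refine ((hasDerivAt_pow (q + 1 + 1) t).const_mul _).congr_deriv ?_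
      rw [Nat.factorial_succ (q + 1)]
      have := Nat.factorial_ne_zero (q + 1)
      have h3 : ((q : ℝ) + 1 + 1) ≠ 0 := by positivity
      push_cast
      field_simp
      try simp
    have key := image_norm_le_of_norm_deriv_right_le_deriv_boundary (a := 0) (b := 1)
      (fun t _ => (hφ t).continuousAt.continuousWithinAt)
      (fun t _ => (hφ t).hasDerivWithinAt) (B := fun t : ℝ =>
        L / (Nat.factorial (q + 1 + 1) : ℝ) * ‖h‖ ^ (q + 1 + 1) * t ^ (q + 1 + 1))
      (by
        have hz : ∀ k, (iteratedFDeriv ℝ (k + 1) f z fun _ => (0 : E)) = 0 := fun k =>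
          ContinuousMultilinearMap.map_coord_zero _ 0 rfl
        simp only [tay, Finset.sum_range_succ' _ (q + 1), zero_smul, add_zero, sub_self, hz]
        simp) hB
      (fun t ht => by
        refine (ContinuousLinearMap.le_opNorm _ _).trans ?_
        have := ih (fderiv ℝ f) h1 hL' (z + t • h)
        rw [add_sub_cancel_left, norm_smul, Real.norm_of_nonneg ht.1] at this
        refine (mul_le_mul_of_nonneg_right this (norm_nonneg _)).trans (le_of_eq ?_)
        ring) (Set.right_mem_Icc.2 zero_le_one)
    simpa [hh] using key

end TaylorAux

theorem aux_main {E : Type} [NormedAddCommGroup E] [NormedSpace ℝ E] {G : Type}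
    [NormedAddCommGroup G] [InnerProductSpace ℝ G] [CompleteSpace G]
    (p : ℕ) (hp : 1 ≤ p) (L : ℝ) (g : E → ℝ) (hg : ContDiff ℝ (p : ℕ∞) g)
    (hLip : ∀ z₁ z₂, ‖iteratedFDeriv ℝ p g z₁ - iteratedFDeriv ℝ p g z₂‖ ≤ L * ‖z₁ - z₂‖)
    (z zh : E) (c : G → E) (c' : G →L[ℝ] E) (hc' : ‖c'‖ ≤ 1) (u : G) (hcu : c u = zh)
    (hc : HasFDerivAt c c' u) :
    ‖gradient (fun u => g (c u)) u - gradient (fun u => tay p g z (c u)) u‖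
      ≤ L * Real.sqrt 2 ^ (p - 1) / (Nat.factorial p : ℝ) * ‖zh - z‖ ^ p := by
  obtain ⟨q, rfl⟩ : ∃ q, p = q + 1 := ⟨p - 1, by omega⟩
  subst hcu
  have h1 : ContDiff ℝ (q : ℕ∞) (fderiv ℝ g) :=
    hg.fderiv_right (by norm_cast)
  have hL' : ∀ w, ‖iteratedFDeriv ℝ q (fderiv ℝ g) w - iteratedFDeriv ℝ q (fderiv ℝ g) z‖
      ≤ L * ‖w - z‖ := by
    intro w
    have := hLip w z
    rw [iteratedFDeriv_succ_eq_comp_right, iteratedFDeriv_succ_eq_comp_right,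
      Function.comp_apply, Function.comp_apply, ← LinearIsometryEquiv.map_sub,
      LinearIsometryEquiv.norm_map] at this
    exact this
  have hb := aux_bound q (fderiv ℝ g) h1 L z hL' (c u)
  have d1 := ((hg.differentiable (by norm_cast) (c u)).hasFDerivAt).comp u hc
  have d2 := (aux_tay q g hg z (c u)).comp u hc
  rw [← (InnerProductSpace.toDual ℝ G).norm_map, map_sub, toDual_gradient, toDual_gradient]
  have e1 : fderiv ℝ (fun u => g (c u)) u = _ := d1.fderiv
  have e2 : fderiv ℝ (fun u => tay (q + 1) g z (c u)) u = _ := d2.fderiv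
  rw [e1, e2, ← ContinuousLinearMap.sub_comp]
  refine (ContinuousLinearMap.opNorm_comp_le _ _).trans ?_
  refine (mul_le_of_le_one_right (norm_nonneg _) hc').trans (hb.trans ?_)
  have hn : 0 ≤ L / (Nat.factorial (q + 1) : ℝ) * ‖c u - z‖ ^ (q + 1) := (norm_nonneg _).trans hb
  have hs : 1 ≤ Real.sqrt 2 ^ q := one_le_pow₀ (Real.one_le_sqrt.2 (by norm_num))
  calc _ ≤ L / (Nat.factorial (q + 1) : ℝ) * ‖c u - z‖ ^ (q + 1) * Real.sqrt 2 ^ q :=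
        le_mul_of_one_le_right hn hs
    _ = _ := by simp only [Nat.add_sub_cancel]; ring

/-- Case `n = p − 1` of Lemma 3 of the paper: if the `p`-th derivative of `g` is
`L_p`-Lipschitz, then the block gradients of `g` and of its `p`-th order Taylor polynomial
`Φ_{z,p}` differ by at most `(L_p (√2)^{p−1}/p!) ‖ẑ − z‖^p`. -/
theorem taylor_gradient_remainder_bound {n m : ℕ} (p : ℕ) (hp : 1 ≤ p) (Lp : ℝ)
    (g : WithLp 2 (EuclideanSpace ℝ (Fin n) × EuclideanSpace ℝ (Fin m)) → ℝ)
    (hg : ContDiff ℝ (p : ℕ∞) g)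
    (hLip : ∀ z₁ z₂, ‖iteratedFDeriv ℝ p g z₁ - iteratedFDeriv ℝ p g z₂‖ ≤ Lp * ‖z₁ - z₂‖) :
    ∀ (x xh : EuclideanSpace ℝ (Fin n)) (y yh : EuclideanSpace ℝ (Fin m)),
      ‖gradXZ g xh yh - gradXZ (taylorPoly p g (mkZ x y)) xh yh‖
          ≤ Lp * Real.sqrt 2 ^ (p - 1) / (Nat.factorial p : ℝ) * ‖mkZ xh yh - mkZ x y‖ ^ p ∧
      ‖gradYZ g xh yh - gradYZ (taylorPoly p g (mkZ x y)) xh yh‖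
          ≤ Lp * Real.sqrt 2 ^ (p - 1) / (Nat.factorial p : ℝ) * ‖mkZ xh yh - mkZ x y‖ ^ p := by
  intro x xh y yh
  constructor
  · refine aux_main p hp Lp g hg hLip (mkZ x y) (mkZ xh yh) (fun x' => mkZ x' yh)
      ((WithLp.prodContinuousLinearEquiv 2 ℝ (EuclideanSpace ℝ (Fin n))
        (EuclideanSpace ℝ (Fin m))).symm.toContinuousLinearMap ∘L
        ContinuousLinearMap.inl ℝ _ _) ?_ xh rfl ?_
    · refine ContinuousLinearMap.opNorm_le_bound _ zero_le_one fun v => ?_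
      simp
    · exact HasFDerivAt.comp (f := fun x' => (x', yh)) xh
        ((WithLp.prodContinuousLinearEquiv 2 ℝ (EuclideanSpace ℝ (Fin n))
        (EuclideanSpace ℝ (Fin m))).symm.hasFDerivAt)
        (hasFDerivAt_prodMk_left xh yh)
  · refine aux_main p hp Lp g hg hLip (mkZ x y) (mkZ xh yh) (fun y' => mkZ xh y')
      ((WithLp.prodContinuousLinearEquiv 2 ℝ (EuclideanSpace ℝ (Fin n))
        (EuclideanSpace ℝ (Fin m))).symm.toContinuousLinearMap ∘L
        ContinuousLinearMap.inr ℝ _ _) ?_ yh rfl ?_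
    · refine ContinuousLinearMap.opNorm_le_bound _ zero_le_one fun v => ?_
      simp
    · exact HasFDerivAt.comp (f := fun y' => (xh, y')) yh
        ((WithLp.prodContinuousLinearEquiv 2 ℝ (EuclideanSpace ℝ (Fin n))
        (EuclideanSpace ℝ (Fin m))).symm.hasFDerivAt)
        (hasFDerivAt_prodMk_right xh yh)
end

section
/- Let p ≥ 2 and let g : ℝ^n × ℝ^m → ℝ be p times continuously differentiable with L_p-Lipschitz p-th derivative, and let M ≥ √2 · p · L_p. Fix (x,y) ∈ ℝ^n × ℝ^m and define Ω_{(x,y),p,M}(x̂,ŷ) = Φ_{(x,y),p}(x̂,ŷ) + (M(√2)^{p−1}/(p+1)!)‖x̂ − x‖₂^{p+1} − (M(√2)^{p−1}/(p+1)!)‖ŷ − y‖₂^{p+1}. Suppose (x̃,ỹ) satisfies Ω_{(x,y),p,M}(x̃, y') ≤ Ω_{(x,y),p,M}(x̃, ỹ) for all y' ∈ ℝ^m (ỹ maximizes Ω in its second argument at x̃). Then Ω_{(x,y),p,M}(x̃,ỹ) − g(x̃, y) ≥ (M/(p·(p+1)!)) · ‖x̃ − x‖₂^{p+1}. -/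
/-- The regularized Taylor model
`Ω_{(x,y),p,M}(x̂,ŷ) = Φ_{(x,y),p}(x̂,ŷ) + (M(√2)^{p−1}/(p+1)!)‖x̂ − x‖^{p+1}
− (M(√2)^{p−1}/(p+1)!)‖ŷ − y‖^{p+1}`. -/
noncomputable def omegaModel {n m : ℕ} (p : ℕ) (M : ℝ)
    (g : WithLp 2 (EuclideanSpace ℝ (Fin n) × EuclideanSpace ℝ (Fin m)) → ℝ)
    (x : EuclideanSpace ℝ (Fin n)) (y : EuclideanSpace ℝ (Fin m)) :
    WithLp 2 (EuclideanSpace ℝ (Fin n) × EuclideanSpace ℝ (Fin m)) → ℝ :=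
  fun zh =>
    taylorPoly p g (mkZ x y) zh
      + M * Real.sqrt 2 ^ (p - 1) / (Nat.factorial (p + 1) : ℝ)
          * ‖(WithLp.equiv 2 (EuclideanSpace ℝ (Fin n) × EuclideanSpace ℝ (Fin m)) zh).1 - x‖ ^ (p + 1)
      - M * Real.sqrt 2 ^ (p - 1) / (Nat.factorial (p + 1) : ℝ)
          * ‖(WithLp.equiv 2 (EuclideanSpace ℝ (Fin n) × EuclideanSpace ℝ (Fin m)) zh).2 - y‖ ^ (p + 1)

lemma aux_deriv (n : ℕ) (f : ℕ → ℝ → ℝ)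
    (hf : ∀ k, k < n + 1 → ∀ t, HasDerivAt (f k) (f (k+1) t) t) (t : ℝ) :
    HasDerivAt (fun t => ∑ k ∈ Finset.range (n+1), (1 / (Nat.factorial k : ℝ)) * (f k t * (1 - t)^k))
      (f (n+1) t * (1-t)^n / (Nat.factorial n : ℝ)) t := by
  induction n with
  | zero => simpa using hf 0 (by omega) t
  | succ n ih =>
    have h1 := ih (fun k hk => hf k (by omega))
    have h2 := hf (n+1) (by omega) t
    have h3 : HasDerivAt (fun t : ℝ => (1 - t)^(n+1)) (-((n+1:ℝ) * (1-t)^n)) t := by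
      have := ((hasDerivAt_id t).const_sub 1).pow (n+1)
      refine this.congr_deriv ?_
      simp
    have h4 := h1.add ((h2.mul h3).const_mul (1 / (Nat.factorial (n+1) : ℝ)))
    simp_rw [Finset.sum_range_succ _ (n+1)]
    refine h4.congr_deriv ?_
    have : (Nat.factorial n : ℝ) ≠ 0 := by positivity
    rw [Nat.factorial_succ]
    push_cast
    field_simp
    ring

lemma aux_taylor (n : ℕ) (f : ℕ → ℝ → ℝ) (C : ℝ)
    (hf : ∀ k, k < n + 1 → ∀ t, HasDerivAt (f k) (f (k+1) t) t)
    (hC : ∀ t, 0 ≤ t → f (n+1) t - f (n+1) 0 ≤ C * t) :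
    f 0 1 ≤ ∑ k ∈ Finset.range (n+2), (1 / (Nat.factorial k : ℝ)) * f k 0
      + C / (Nat.factorial (n+2) : ℝ) := by
  have hpow : ∀ (k : ℕ) (t : ℝ), HasDerivAt (fun t : ℝ => (1 - t)^(k+1)) (-((k+1:ℝ) * (1-t)^k)) t := by
    intro k t
    have := ((hasDerivAt_id t).const_sub 1).pow (k+1)
    refine this.congr_deriv ?_
    simp
  set c := f (n+1) 0
  let D : ℝ → ℝ := fun t =>
    ((∑ k ∈ Finset.range (n+1), (1 / (Nat.factorial k : ℝ)) * (f k t * (1 - t)^k))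
      + (c / (Nat.factorial (n+1) : ℝ)) * (1-t)^(n+1))
      - ((C * (n+1) / (Nat.factorial (n+2) : ℝ)) * (1-t)^(n+2) - (C / (Nat.factorial (n+1) : ℝ)) * (1-t)^(n+1))
  have hD : ∀ t, HasDerivAt D ((f (n+1) t - c - C * t) * (1-t)^n / (Nat.factorial n : ℝ)) t := by
    intro t
    have := ((aux_deriv n f hf t).add ((hpow n t).const_mul (c / (Nat.factorial (n+1) : ℝ)))).sub
      (((hpow (n+1) t).const_mul (C * (n+1) / (Nat.factorial (n+2) : ℝ))).sub
        ((hpow n t).const_mul (C / (Nat.factorial (n+1) : ℝ))))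
    refine this.congr_deriv ?_
    have : (Nat.factorial n : ℝ) ≠ 0 := by positivity
    rw [Nat.factorial_succ (n+1), Nat.factorial_succ n]
    push_cast
    field_simp
    ring
  have hanti : AntitoneOn D (Set.Icc 0 1) := by
    refine antitoneOn_of_hasDerivWithinAt_nonpos (convex_Icc 0 1)
      (fun t _ => (hD t).continuousAt.continuousWithinAt)
      (fun t _ => (hD t).hasDerivWithinAt) ?_
    intro t ht
    rw [interior_Icc] at ht
    have h1 := hC t ht.1.le
    have h2 : 0 ≤ 1 - t := by linarith [ht.2]
    refine div_nonpos_of_nonpos_of_nonneg (mul_nonpos_of_nonpos_of_nonneg ?_ (by positivity)) (by positivity)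
    linarith
  have h := hanti (by simp : (0:ℝ) ∈ Set.Icc (0:ℝ) 1) (by simp : (1:ℝ) ∈ Set.Icc (0:ℝ) 1) zero_le_one
  have h1 : D 1 = f 0 1 := by
    simp [D, Finset.sum_range_succ']
  have h0 : D 0 = ∑ k ∈ Finset.range (n+2), (1 / (Nat.factorial k : ℝ)) * f k 0
      - (C * (n+1) / (Nat.factorial (n+2) : ℝ) - C / (Nat.factorial (n+1) : ℝ)) := by
    simp only [D, Finset.sum_range_succ _ (n+1), sub_zero, one_pow, mul_one, c]
    ring
  have hfac : C / (Nat.factorial (n+1) : ℝ) = (n+2) * (C / (Nat.factorial (n+2) : ℝ)) := by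
    rw [Nat.factorial_succ (n+1)]; push_cast
    have : (Nat.factorial (n+1) : ℝ) ≠ 0 := by positivity
    field_simp
    ring
  rw [h1, h0, hfac, mul_div_right_comm] at h
  linarith

lemma aux_multi {E : Type*} [NormedAddCommGroup E] [NormedSpace ℝ E] (n : ℕ) (g : E → ℝ) (L : ℝ)
    (hg : ContDiff ℝ ((n + 1 : ℕ) : ℕ∞) g)
    (hLip : ∀ z₁ z₂, ‖iteratedFDeriv ℝ (n+1) g z₁ - iteratedFDeriv ℝ (n+1) g z₂‖ ≤ L * ‖z₁ - z₂‖)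
    (z v : E) :
    g (z + v) ≤ ∑ k ∈ Finset.range (n+2), (1 / (Nat.factorial k : ℝ)) *
        iteratedFDeriv ℝ k g z (fun _ => v)
      + L * ‖v‖ ^ (n + 2) / (Nat.factorial (n+2) : ℝ) := by
  have hT := aux_taylor n
    (fun k t => iteratedFDeriv ℝ k g (z + t • v) (fun _ => v)) (L * ‖v‖ ^ (n + 2))
    (by
      intro k hk t
      have hd : DifferentiableAt ℝ (iteratedFDeriv ℝ k g) (z + t • v) :=
        (hg.differentiable_iteratedFDeriv (by exact_mod_cast hk)) _
      have hl : HasDerivAt (fun t : ℝ => z + t • v) v t := by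
        simpa using ((hasDerivAt_id t).smul_const v).const_add z
      have h1 := HasFDerivAt.comp_hasDerivAt (f := fun t : ℝ => z + t • v) t hd.hasFDerivAt hl
      have h2 := ((ContinuousMultilinearMap.apply ℝ
        (fun _ : Fin k => E) ℝ (fun _ => v)).hasFDerivAt).comp_hasDerivAt t h1
      refine h2.congr_deriv ?_
      simp [iteratedFDeriv_succ_apply_left, Fin.tail_def])
    (by
      intro t ht
      have h1 := hLip (z + t • v) (z + (0:ℝ) • v)
      have h2 := (iteratedFDeriv ℝ (n+1) g (z + t • v)
        - iteratedFDeriv ℝ (n+1) g (z + (0:ℝ) • v)).le_opNorm (fun _ => v)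
      have h3 : ‖z + t • v - (z + (0:ℝ) • v)‖ = t * ‖v‖ := by
        simp [norm_smul, abs_of_nonneg ht]
      rw [h3] at h1
      rw [Finset.prod_const, Finset.card_univ, Fintype.card_fin] at h2
      have h4 := (le_abs_self _).trans (h2.trans (mul_le_mul_of_nonneg_right h1 (by positivity)))
      rw [sub_apply] at h4
      refine h4.trans (le_of_eq ?_)
      ring)
  simpa using hT

set_option maxHeartbeats 2000000 in
/-- Inequality (18) in the paper's saddle-point version of Lemma 5.2: if `M ≥ √2 p L_p` and
`ỹ` maximizes the regularized Taylor model `Ω_{(x,y),p,M}(x̃, ·)`, then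
`Ω_{(x,y),p,M}(x̃,ỹ) − g(x̃, y) ≥ (M/(p (p+1)!)) ‖x̃ − x‖^{p+1}`. -/
theorem model_minus_g_lower_bound {n m : ℕ} (p : ℕ) (hp : 2 ≤ p)
    (Lp M : ℝ) (hLp : 0 < Lp) (hM : Real.sqrt 2 * p * Lp ≤ M)
    (g : WithLp 2 (EuclideanSpace ℝ (Fin n) × EuclideanSpace ℝ (Fin m)) → ℝ)
    (hg : ContDiff ℝ (p : ℕ∞) g)
    (hLip : ∀ z₁ z₂, ‖iteratedFDeriv ℝ p g z₁ - iteratedFDeriv ℝ p g z₂‖ ≤ Lp * ‖z₁ - z₂‖)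
    (x xt : EuclideanSpace ℝ (Fin n)) (y yt : EuclideanSpace ℝ (Fin m))
    (hmax : ∀ y' : EuclideanSpace ℝ (Fin m),
      omegaModel p M g x y (mkZ xt y') ≤ omegaModel p M g x y (mkZ xt yt)) :
    omegaModel p M g x y (mkZ xt yt) - g (mkZ xt y)
      ≥ M / (p * (Nat.factorial (p + 1) : ℝ)) * ‖xt - x‖ ^ (p + 1) := by
  obtain ⟨n', rfl⟩ : ∃ n', p = n' + 1 := ⟨p - 1, by omega⟩
  refine ge_iff_le.mpr (le_trans ?_ (sub_le_sub_right (hmax y) _))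
  set v := mkZ xt y - mkZ x y with hv
  have hnv : ‖v‖ = ‖xt - x‖ := by
    rw [hv, WithLp.prod_norm_eq_of_L2]
    simp [mkZ]
  have hT := aux_multi n' g Lp hg hLip (mkZ x y) v
  have hpt : mkZ x y + v = mkZ xt y := by simp [hv]
  rw [hpt, hnv] at hT
  have hΩ : omegaModel (n'+1) M g x y (mkZ xt y) =
      ∑ k ∈ Finset.range (n'+2), (1 / (Nat.factorial k : ℝ)) *
        iteratedFDeriv ℝ k g (mkZ x y) (fun _ => v)
      + M * Real.sqrt 2 ^ n' / (Nat.factorial (n' + 2) : ℝ) * ‖xt - x‖ ^ (n' + 2) := by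
    simp [omegaModel, taylorPoly, mkZ, hv]
  rw [hΩ]
  have hs : (1:ℝ) ≤ Real.sqrt 2 := by
    rw [Real.one_le_sqrt]; norm_num
  have hs2 : Real.sqrt 2 * Real.sqrt 2 = 2 := Real.mul_self_sqrt (by norm_num)
  have hpow : Real.sqrt 2 ≤ Real.sqrt 2 ^ n' := le_self_pow₀ hs (by omega)
  have hn1 : (1:ℝ) ≤ n' := by exact_mod_cast (by omega : 1 ≤ n')
  push_cast at hM ⊢
  have hM0 : 0 < M := lt_of_lt_of_le (by positivity) hM
  have key : M / (n' + 1) + Lp ≤ M * Real.sqrt 2 ^ n' := by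
    have h1 : M * Real.sqrt 2 ≤ M * Real.sqrt 2 ^ n' := by gcongr
    have h2 : M / (n' + 1) ≤ M / 2 := by gcongr; linarith
    have h3 : 2 * (Real.sqrt 2 * Lp) ≤ M := by
      refine le_trans ?_ hM
      have : 0 ≤ Real.sqrt 2 * Lp := by positivity
      nlinarith
    have h4 : 2 * Lp ≤ M := by nlinarith
    have h5 : M ≤ M * Real.sqrt 2 := by nlinarith
    linarith
  have hfin : M / ((n' + 1) * (Nat.factorial (n' + 2) : ℝ)) * ‖xt - x‖ ^ (n' + 2)
      + Lp * ‖xt - x‖ ^ (n' + 2) / (Nat.factorial (n' + 2) : ℝ)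
      ≤ M * Real.sqrt 2 ^ n' / (Nat.factorial (n' + 2) : ℝ) * ‖xt - x‖ ^ (n' + 2) := by
    have := mul_le_mul_of_nonneg_right key
      (by positivity : 0 ≤ ‖xt - x‖ ^ (n' + 2) / (Nat.factorial (n' + 2) : ℝ))
    calc _ = (M / (n' + 1) + Lp) * (‖xt - x‖ ^ (n' + 2) / (Nat.factorial (n' + 2) : ℝ)) := by
          field_simp
      _ ≤ _ := this
      _ = _ := by ring
  have e : n' + 1 + 1 = n' + 2 := rfl
  rw [e]
  linarith
end

section
/- Let p ≥ 2 and let g : ℝ^n × ℝ^m → ℝ be p times continuously differentiable with L_p-Lipschitz p-th derivative, and let M ≥ √2 · p · L_p. Fix (x,y) ∈ ℝ^n × ℝ^m and define Ω_{(x,y),p,M} as the regularized Taylor model Ω_{(x,y),p,M}(x̂,ŷ) = Φ_{(x,y),p}(x̂,ŷ) + (M(√2)^{p−1}/(p+1)!)‖x̂ − x‖₂^{p+1} − (M(√2)^{p−1}/(p+1)!)‖ŷ − y‖₂^{p+1}. Suppose (x̃,ỹ) is a saddle point of Ω_{(x,y),p,M}: Ω_{(x,y),p,M}(x̃, y') ≤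 Ω_{(x,y),p,M}(x̃, ỹ) ≤ Ω_{(x,y),p,M}(x', ỹ) for all x' ∈ ℝ^n, y' ∈ ℝ^m. Then g(x, ỹ) − g(x̃, y) ≥ (M/(p·(p+1)!)) · (‖x̃ − x‖₂^{p+1} + ‖ỹ − y‖₂^{p+1}). -/
theorem aux_taylor_s14 (p : ℕ) : ∀ (F : ℕ → ℝ → ℝ) (K : ℝ),
    (∀ i < p, ∀ t, HasDerivAt (F i) (F (i + 1) t) t) →
    (∀ t, 0 ≤ t → |F p t - F p 0| ≤ K * t) →
    ∀ t, 0 ≤ t → |F 0 t - ∑ i ∈ Finset.range (p + 1), (1 / (Nat.factorial i : ℝ)) * F i 0 * t ^ i|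
      ≤ K / (Nat.factorial (p + 1) : ℝ) * t ^ (p + 1) := by
  induction p with
  | zero =>
    intro F K _ h t ht
    simpa using h t ht
  | succ p ih =>
    intro F K hd h t ht
    have ih' := ih (fun i => F (i + 1)) K (fun i hi => hd (i + 1) (by omega)) h
    set R : ℝ → ℝ := fun t => F 0 t - ∑ i ∈ Finset.range (p + 1 + 1),
      (1 / (Nat.factorial i : ℝ)) * F i 0 * t ^ i with hR
    set R' : ℝ → ℝ := fun t => F 1 t - ∑ i ∈ Finset.range (p + 1),
      (1 / (Nat.factorial i : ℝ)) * F (i + 1) 0 * t ^ i with hR'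
    have hfac : ∀ i : ℕ, (Nat.factorial i : ℝ) ≠ 0 := fun i => by positivity
    have hRd : ∀ s, HasDerivAt R (R' s) s := by
      intro s
      refine (hd 0 (by omega) s).sub ?_
      have h1 : HasDerivAt (fun t : ℝ => ∑ i ∈ Finset.range (p + 1 + 1),
          (1 / (Nat.factorial i : ℝ)) * F i 0 * t ^ i)
          (∑ i ∈ Finset.range (p + 1 + 1),
          (1 / (Nat.factorial i : ℝ)) * F i 0 * (i * s ^ (i - 1))) s :=
        HasDerivAt.fun_sum fun i _ => (hasDerivAt_pow i s).const_mul _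
      refine h1.congr_deriv (Eq.symm ?_)
      rw [Finset.sum_range_succ' _ (p + 1)]
      simp only [Nat.cast_zero, zero_mul, mul_zero, add_zero]
      refine Finset.sum_congr rfl fun i _ => ?_
      have := hfac i
      rw [Nat.factorial_succ]
      push_cast
      have : (i : ℝ) + 1 ≠ 0 := by positivity
      field_simp
    have key := image_norm_le_of_norm_deriv_right_le_deriv_boundary (f := R) (f' := R')
      (a := 0) (b := t) (B := fun t => K / (Nat.factorial (p + 1 + 1) : ℝ) * t ^ (p + 1 + 1))
      (B' := fun t => K / (Nat.factorial (p + 1) : ℝ) * t ^ (p + 1))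
      (fun s _ => (hRd s).continuousAt.continuousWithinAt)
      (fun s _ => (hRd s).hasDerivWithinAt)
      (by simp [hR, Finset.sum_range_succ'])
      (by
        intro s
        have h2 := (hasDerivAt_pow (p + 1 + 1) s).const_mul (K / (Nat.factorial (p + 1 + 1) : ℝ))
        refine h2.congr_deriv (Eq.symm ?_)
        rw [Nat.factorial_succ (p + 1)]
        have := hfac (p + 1)
        push_cast
        have : (p : ℝ) + 1 + 1 ≠ 0 := by positivity
        field_simp)
      (by
        intro s hs
        exact ih' s hs.1)
    exact key ⟨ht, le_refl t⟩

theorem aux_deriv_s14 {E : Type*} [NormedAddCommGroup E] [NormedSpace ℝ E] (p : ℕ) (g : E → ℝ)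
    (hg : ContDiff ℝ (p : ℕ∞) g) (z h : E) (i : ℕ) (hi : i < p) (t : ℝ) :
    HasDerivAt (fun t : ℝ => iteratedFDeriv ℝ i g (z + t • h) (fun _ => h))
      (iteratedFDeriv ℝ (i + 1) g (z + t • h) (fun _ => h)) t := by
  have hdiff : Differentiable ℝ (iteratedFDeriv ℝ i g) :=
    hg.differentiable_iteratedFDeriv (by exact_mod_cast hi)
  have h1 : HasDerivAt (fun t : ℝ => z + t • h) h t := by
    simpa using ((hasDerivAt_id t).smul_const h).const_add z
  have h2 := (hdiff (z + t • h)).hasFDerivAt.comp_hasDerivAt t h1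
  have h3 := (ContinuousMultilinearMap.apply ℝ (fun _ : Fin i => E) ℝ
    (fun _ => h)).hasFDerivAt.comp_hasDerivAt t h2
  rw [iteratedFDeriv_succ_apply_left]
  exact h3

theorem aux_taylorPoly {n m : ℕ} (p : ℕ) (Lp : ℝ)
    (g : WithLp 2 (EuclideanSpace ℝ (Fin n) × EuclideanSpace ℝ (Fin m)) → ℝ)
    (hg : ContDiff ℝ (p : ℕ∞) g)
    (hLip : ∀ z₁ z₂, ‖iteratedFDeriv ℝ p g z₁ - iteratedFDeriv ℝ p g z₂‖ ≤ Lp * ‖z₁ - z₂‖)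
    (z w : WithLp 2 (EuclideanSpace ℝ (Fin n) × EuclideanSpace ℝ (Fin m))) :
    |g w - taylorPoly p g z w| ≤ Lp / (Nat.factorial (p + 1) : ℝ) * ‖w - z‖ ^ (p + 1) := by
  have h := aux_taylor_s14 p (fun i t => iteratedFDeriv ℝ i g (z + t • (w - z)) (fun _ => w - z))
    (Lp * ‖w - z‖ ^ (p + 1)) ?_ ?_ 1 zero_le_one
  · simp only [one_smul, zero_smul, add_zero, add_sub_cancel, iteratedFDeriv_zero_apply,
      one_pow, mul_one] at h
    unfold taylorPoly
    rw [div_mul_eq_mul_div]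
    exact h
  · intro i hi t
    exact aux_deriv_s14 p g hg z (w - z) i hi t
  · intro t ht
    simp only [zero_smul, add_zero]
    rw [← ContinuousMultilinearMap.sub_apply, ← Real.norm_eq_abs]
    refine (ContinuousMultilinearMap.le_opNorm _ _).trans ?_
    have h1 := hLip (z + t • (w - z)) z
    rw [add_sub_cancel_left, norm_smul, Real.norm_of_nonneg ht] at h1
    simp only [Finset.prod_const, Finset.card_univ, Fintype.card_fin]
    calc _ ≤ (Lp * (t * ‖w - z‖)) * ‖w - z‖ ^ p := by gcongr
      _ = _ := by ring

/-- Inequality (20) in the paper's saddle-point version of Lemma 5.2: if `M ≥ √2 p L_p` and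
`(x̃,ỹ)` is a saddle point of the regularized Taylor model `Ω_{(x,y),p,M}`, then
`g(x, ỹ) − g(x̃, y) ≥ (M/(p (p+1)!)) (‖x̃ − x‖^{p+1} + ‖ỹ − y‖^{p+1})`. -/
theorem model_saddle_gap_lower_bound {n m : ℕ} (p : ℕ) (hp : 2 ≤ p)
    (Lp M : ℝ) (hLp : 0 < Lp) (hM : Real.sqrt 2 * p * Lp ≤ M)
    (g : WithLp 2 (EuclideanSpace ℝ (Fin n) × EuclideanSpace ℝ (Fin m)) → ℝ)
    (hg : ContDiff ℝ (p : ℕ∞) g)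
    (hLip : ∀ z₁ z₂, ‖iteratedFDeriv ℝ p g z₁ - iteratedFDeriv ℝ p g z₂‖ ≤ Lp * ‖z₁ - z₂‖)
    (x xt : EuclideanSpace ℝ (Fin n)) (y yt : EuclideanSpace ℝ (Fin m))
    (hsaddle : ∀ (x' : EuclideanSpace ℝ (Fin n)) (y' : EuclideanSpace ℝ (Fin m)),
      omegaModel p M g x y (mkZ xt y') ≤ omegaModel p M g x y (mkZ xt yt) ∧
      omegaModel p M g x y (mkZ xt yt) ≤ omegaModel p M g x y (mkZ x' yt)) :
    g (mkZ x yt) - g (mkZ xt y)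
      ≥ M / (p * (Nat.factorial (p + 1) : ℝ)) * (‖xt - x‖ ^ (p + 1) + ‖yt - y‖ ^ (p + 1)) := by
  have hs := Real.sqrt_nonneg 2
  have hs2 : (7/5 : ℝ) ≤ Real.sqrt 2 := Real.le_sqrt_of_sq_le (by norm_num)
  have hp' : (2 : ℝ) ≤ p := by exact_mod_cast hp
  have hA := (hsaddle x y).1
  have hB := (hsaddle x y).2
  have e1 : ‖mkZ xt y - mkZ x y‖ = ‖xt - x‖ := by
    simp [mkZ, WithLp.prod_norm_eq_of_L2]
  have e2 : ‖mkZ x yt - mkZ x y‖ = ‖yt - y‖ := by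
    simp [mkZ, WithLp.prod_norm_eq_of_L2]
  have t1 := aux_taylorPoly p Lp g hg hLip (mkZ x y) (mkZ xt y)
  have t2 := aux_taylorPoly p Lp g hg hLip (mkZ x y) (mkZ x yt)
  rw [e1, abs_le] at t1
  rw [e2, abs_le] at t2
  have o1 : omegaModel p M g x y (mkZ xt y) = taylorPoly p g (mkZ x y) (mkZ xt y)
      + M * Real.sqrt 2 ^ (p - 1) / (Nat.factorial (p + 1) : ℝ) * ‖xt - x‖ ^ (p + 1) := by
    simp [omegaModel, mkZ]
  have o2 : omegaModel p M g x y (mkZ x yt) = taylorPoly p g (mkZ x y) (mkZ x yt)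
      - M * Real.sqrt 2 ^ (p - 1) / (Nat.factorial (p + 1) : ℝ) * ‖yt - y‖ ^ (p + 1) := by
    simp [omegaModel, mkZ]
  have hMpos : 0 < M := lt_of_lt_of_le (by positivity) hM
  have hpow : Real.sqrt 2 ≤ Real.sqrt 2 ^ (p - 1) :=
    le_self_pow₀ (by linarith) (by omega)
  have hMp : M / p ≤ M / 2 := by gcongr
  have hL : Lp ≤ M / 2 * (5 / 7) := by
    have : (7/5 : ℝ) * 2 * Lp ≤ Real.sqrt 2 * p * Lp := by gcongr
    linarith
  have hc : M / p + Lp ≤ M * Real.sqrt 2 ^ (p - 1) := by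
    have : M * (7/5) ≤ M * Real.sqrt 2 ^ (p - 1) := by gcongr; linarith
    linarith
  have hf : (0 : ℝ) < Nat.factorial (p + 1) := by positivity
  have hc2 : M / (p * (Nat.factorial (p + 1) : ℝ)) + Lp / (Nat.factorial (p + 1) : ℝ)
      ≤ M * Real.sqrt 2 ^ (p - 1) / (Nat.factorial (p + 1) : ℝ) := by
    rw [← div_div, ← add_div]
    gcongr
  have a1 := mul_le_mul_of_nonneg_right hc2 (pow_nonneg (norm_nonneg (xt - x)) (p + 1))
  have a2 := mul_le_mul_of_nonneg_right hc2 (pow_nonneg (norm_nonneg (yt - y)) (p + 1))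
  rw [add_mul] at a1 a2
  rw [ge_iff_le, mul_add]
  linarith [t1.1, t1.2, t2.1, t2.2]
end
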